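/- arXiv:1005.3338 — 6 statements merged into one kernel-verified Lean document; each statement's English description precedes it below -/
import Mathlib

section
/- For all real SNR ≥ 0 and INR ≥ 0, the symmetric outer bound exceeds the symmetric achievable rate by at most 1 bit: C̄_sym(SNR,INR) ≤ R_sym(SNR,INR) + 1, where C̄_sym(SNR,INR) = sup_{ρ∈[0,1]} (1/2)·[ log₂(1 + (1−ρ²)·SNR/(1 + (1−ρ²)·INR)) + log₂(1 + SNR + INR + 2ρ·√(SNR·INR)) ] and R_sym(SNR,INR) = max( (1/2)·log₂(1 + INR), (1/2)·log₂( ((1+SNR+INR)² − SNR/(1+INR)) / (1 + 2·INR) ) ). -/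
open Real Set

/-!
By AM-GM the received power `1 + SNR + INR + 2ρ√(SNR·INR)` is at most twice its value at `ρ = 0`,
while the factor `1 + (1 - ρ²)SNR / (1 + (1 - ρ²)INR)` is largest at `ρ = 0`. Hence, inside the
logarithm, the outer bound is at most `2(1 + SNR + INR)² / (1 + INR)`. Since
`2 SNR ≤ (1 + SNR + INR)²`, this is at most four times the argument of the second rate in the
maximum, and a factor of four inside the logarithm costs one bit after the prefactor `1/2`.
-/

section LinearOrderedField

variable {K : Type*} [Field K] [LinearOrder K] [IsStrictOrderedRing K] {x y : K}

lemma monotoneOn_mul_div_one_add_mul (hx : 0 ≤ x) (hy : 0 ≤ y) :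
    MonotoneOn (fun t : K => t * x / (1 + t * y)) (Ici 0) := by
  intro s (hs : 0 ≤ s) t (ht : 0 ≤ t) hst
  have cross_mul : s * x * (1 + t * y) ≤ t * x * (1 + s * y) := by
    linear_combination x * hst
  exact (div_le_div_iff₀ (by positivity) (by positivity)).2 cross_mul

lemma one_add_div_mul_two_mul_le (hx : 0 ≤ x) (hy : 0 ≤ y) :
    (1 + x / (1 + y)) * (2 * (1 + x + y)) ≤
      4 * (((1 + x + y) ^ 2 - x / (1 + y)) / (1 + 2 * y)) := by
  have two_mul_le_sq : 0 ≤ (1 + x + y) ^ 2 - 2 * x := by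
    have : 0 ≤ 1 + x ^ 2 + y ^ 2 + 2 * y + 2 * x * y := by positivity
    linear_combination this
  have difference_nonneg : 0 ≤ 2 * ((1 + x + y) ^ 2 - 2 * x) / ((1 + y) * (1 + 2 * y)) := by
    positivity
  refine sub_nonneg.1 (difference_nonneg.trans_eq ?_)
  field_simp
  ring

end LinearOrderedField

lemma abs_two_mul_mul_sqrt_mul_le_add {x y ρ : ℝ} (hx : 0 ≤ x) (hy : 0 ≤ y) (hρ : |ρ| ≤ 1) :
    |2 * ρ * √(x * y)| ≤ x + y := by
  calc |2 * ρ * √(x * y)| = |ρ| * (2 * √x * √y) := by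
        rw [sqrt_mul hx, abs_mul, abs_mul, abs_two, abs_of_nonneg (by positivity : 0 ≤ √x * √y)]
        ring
    _ ≤ 2 * √x * √y := mul_le_of_le_one_left (by positivity) hρ
    _ ≤ √x ^ 2 + √y ^ 2 := two_mul_le_add_sq _ _
    _ = x + y := by rw [sq_sqrt hx, sq_sqrt hy]

lemma logb_le_natCast_add_logb_of_le_pow_mul {b x y : ℝ} {n : ℕ} (hb : 1 < b) (hx : 0 < x)
    (hxy : x ≤ b ^ n * y) : logb b x ≤ n + logb b y := by
  have hbn : 0 < b ^ n := by positivity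
  have hy : 0 < y := pos_of_mul_pos_right (hx.trans_le hxy) hbn.le
  calc logb b x ≤ logb b (b ^ n * y) := logb_le_logb_of_le hb hx hxy
    _ = n + logb b y := by
      rw [logb_mul hbn.ne' hy.ne', logb_pow, logb_self_eq_one hb, mul_one]

/-- The symmetric outer bound for a fixed correlation `ρ` between the two transmitted signals;
`C̄_sym` is its supremum over `ρ ∈ [0, 1]`. -/
noncomputable def correlatedOuterRate (SNR INR ρ : ℝ) : ℝ :=
  (1 / 2) * (logb 2 (1 + (1 - ρ ^ 2) * SNR / (1 + (1 - ρ ^ 2) * INR)) +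
    logb 2 (1 + SNR + INR + 2 * ρ * √(SNR * INR)))

/-- The second of the two rates whose maximum is the symmetric achievable rate `R_sym`. It alone is
within one bit of the outer bound. -/
noncomputable def secondAchievableRate (SNR INR : ℝ) : ℝ :=
  (1 / 2) * logb 2 (((1 + SNR + INR) ^ 2 - SNR / (1 + INR)) / (1 + 2 * INR))

theorem correlatedOuterRate_le_secondAchievableRate_add_one {SNR INR ρ : ℝ}
    (hS : 0 ≤ SNR) (hI : 0 ≤ INR) (hρ : |ρ| ≤ 1) :
    correlatedOuterRate SNR INR ρ ≤ secondAchievableRate SNR INR + 1 := by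
  unfold correlatedOuterRate secondAchievableRate
  set A := 1 + (1 - ρ ^ 2) * SNR / (1 + (1 - ρ ^ 2) * INR)
  set B := 1 + SNR + INR + 2 * ρ * √(SNR * INR)
  set Q := ((1 + SNR + INR) ^ 2 - SNR / (1 + INR)) / (1 + 2 * INR)
  have ht : 0 ≤ 1 - ρ ^ 2 := sub_nonneg.2 ((sq_le_one_iff_abs_le_one ρ).2 hρ)
  have hA_pos : 0 < A := by positivity
  have hA_le : A ≤ 1 + SNR / (1 + INR) := by
    have := monotoneOn_mul_div_one_add_mul hS hI ht (mem_Ici.2 zero_le_one)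
      (sub_le_self 1 (sq_nonneg ρ))
    simpa only [one_mul] using add_le_add_right this 1
  obtain ⟨cross_ge, cross_le⟩ := abs_le.1 (abs_two_mul_mul_sqrt_mul_le_add hS hI hρ)
  have hB_pos : 0 < B := by linarith
  have hB_le : B ≤ 2 * (1 + SNR + INR) := by linarith
  have hAB_le : A * B ≤ 2 ^ 2 * Q :=
    calc A * B ≤ (1 + SNR / (1 + INR)) * (2 * (1 + SNR + INR)) := by gcongr
      _ ≤ 4 * Q := one_add_div_mul_two_mul_le hS hI
      _ = 2 ^ 2 * Q := by norm_num
  have hlog : logb 2 A + logb 2 B ≤ 2 + logb 2 Q := by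
    rw [← logb_mul hA_pos.ne' hB_pos.ne']
    exact_mod_cast logb_le_natCast_add_logb_of_le_pow_mul one_lt_two (mul_pos hA_pos hB_pos) hAB_le
  linarith

/-- The symmetric outer bound exceeds the symmetric achievable rate by at most 1 bit. -/
theorem symmetric_capacity_one_bit_gap (SNR INR : ℝ) (hS : 0 ≤ SNR) (hI : 0 ≤ INR) :
    sSup ((fun ρ : ℝ =>
        (1 / 2) * (Real.logb 2 (1 + (1 - ρ ^ 2) * SNR / (1 + (1 - ρ ^ 2) * INR)) +
          Real.logb 2 (1 + SNR + INR + 2 * ρ * Real.sqrt (SNR * INR)))) '' Set.Icc (0 : ℝ) 1)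
      ≤ max ((1 / 2) * Real.logb 2 (1 + INR))
          ((1 / 2) * Real.logb 2 (((1 + SNR + INR) ^ 2 - SNR / (1 + INR)) / (1 + 2 * INR)))
        + 1 := by
  refine csSup_le ((nonempty_Icc.2 zero_le_one).image _) ?_
  rintro _ ⟨ρ, ⟨hρ_nonneg, hρ_le⟩, rfl⟩
  have hρ : |ρ| ≤ 1 := (abs_of_nonneg hρ_nonneg).trans_le hρ_le
  calc correlatedOuterRate SNR INR ρ
      ≤ secondAchievableRate SNR INR + 1 :=
        correlatedOuterRate_le_secondAchievableRate_add_one hS hI hρ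
    _ ≤ _ := add_le_add_left (le_max_right _ _) 1
end

section
/- For all real S ≥ 0 and I ≥ 0, log₂(1 + S/(1+I)) + log₂(1 + S + I + 2·√(S·I)) − log₂( ((1+S+I)² − S/(1+I)) / (1+2I) ) ≤ 2. -/
/-!
Put `T = 1 + S + I` and `r = 1 / (1 + I) ∈ (0, 1]`. After exponentiating, the claim is that `4`
times the numerator `T² - r S` dominates the product of `1 + S / (1 + I) = r T`,
`1 + S + I + 2 √(S I)` and `1 + 2 I`. By AM-GM the second factor is at most `2 T - 1`, and
`r (1 + 2 I) = 2 - r`, so it suffices that `T (2 - r) (2 T - 1) ≤ 4 (T² - r S)`. The terms `4 T²`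
cancel, and `r ≤ 1` reduces what is left to `4 S ≤ 2 T² + T`, which holds because `S ≤ T - 1`.
-/

section OrderedRing

variable {R : Type*} [CommRing R] [LinearOrder R] [IsStrictOrderedRing R] {r S T : R}

lemma four_mul_le_two_mul_sq_add_self (hT : 1 + S ≤ T) : 4 * S ≤ 2 * T ^ 2 + T := by
  nlinarith [sq_nonneg (4 * T - 3)]

lemma mul_two_sub_mul_two_mul_sub_one_le (hr₀ : 0 ≤ r) (hr₁ : r ≤ 1) (hT₀ : 0 ≤ T)
    (hT : 1 + S ≤ T) :
    T * (2 - r) * (2 * T - 1) ≤ 4 * (T ^ 2 - r * S) := by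
  have h_linear : r * T ≤ T := mul_le_of_le_one_left hT₀ hr₁
  have h_quadratic : r * (4 * S) ≤ r * (2 * T ^ 2 + T) := by
    gcongr
    exact four_mul_le_two_mul_sq_add_self hT
  linear_combination 2 * h_linear + h_quadratic

end OrderedRing

section OrderedField

variable {K : Type*} [Field K] [LinearOrder K] [IsStrictOrderedRing K] {S I : K}

lemma one_add_div_mul_mul_le_four_mul_sq_sub_div (hS : 0 ≤ S) (hI : 0 ≤ I) :
    (1 + S / (1 + I)) * (1 + S + I + (S + I)) * (1 + 2 * I) ≤
      4 * ((1 + S + I) ^ 2 - S / (1 + I)) := by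
  have hI₁ : 1 + I ≠ 0 := by positivity
  have h_inv : (1 + I)⁻¹ ≤ 1 := inv_le_one_of_one_le₀ (by linarith)
  calc (1 + S / (1 + I)) * (1 + S + I + (S + I)) * (1 + 2 * I)
      = (1 + S + I) * (2 - (1 + I)⁻¹) * (2 * (1 + S + I) - 1) := by
        field_simp
        ring
    _ ≤ 4 * ((1 + S + I) ^ 2 - (1 + I)⁻¹ * S) :=
        mul_two_sub_mul_two_mul_sub_one_le (by positivity) h_inv (by positivity) (by linarith)
    _ = 4 * ((1 + S + I) ^ 2 - S / (1 + I)) := by rw [inv_mul_eq_div]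

lemma one_add_add_sq_sub_div_pos (hS : 0 ≤ S) (hI : 0 ≤ I) : 0 < (1 + S + I) ^ 2 - S / (1 + I) := by
  have h_prod : 0 < (1 + S / (1 + I)) * (1 + S + I + (S + I)) * (1 + 2 * I) := by positivity
  linarith [one_add_div_mul_mul_le_four_mul_sq_sub_div hS hI]

end OrderedField

lemma logb_add_logb_sub_logb_le_iff {b x y z c : ℝ} (hb : 1 < b) (hx : 0 < x) (hy : 0 < y)
    (hz : 0 < z) :
    Real.logb b x + Real.logb b y - Real.logb b z ≤ c ↔ x * y ≤ b ^ c * z := by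
  rw [← Real.logb_mul hx.ne' hy.ne', ← Real.logb_div (by positivity) hz.ne',
    Real.logb_le_iff_le_rpow hb (by positivity), div_le_iff₀ hz]

/-- The key inequality in the one-bit-gap proof for the symmetric capacity of the
Gaussian interference channel with feedback. -/
theorem outer_minus_inner_le_two (S I : ℝ) (hS : 0 ≤ S) (hI : 0 ≤ I) :
    Real.logb 2 (1 + S / (1 + I)) + Real.logb 2 (1 + S + I + 2 * Real.sqrt (S * I)) -
        Real.logb 2 (((1 + S + I) ^ 2 - S / (1 + I)) / (1 + 2 * I)) ≤ 2 := by
  have h_amgm : 2 * √(S * I) ≤ S + I :=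
    two_mul_le_add_of_sq_le_mul hS hI (Real.sq_sqrt (mul_nonneg hS hI)).le
  have h_inner : 0 < ((1 + S + I) ^ 2 - S / (1 + I)) / (1 + 2 * I) :=
    div_pos (one_add_add_sq_sub_div_pos hS hI) (by positivity)
  rw [logb_add_logb_sub_logb_le_iff one_lt_two (by positivity) (by positivity) h_inner,
    ← mul_div_assoc, le_div_iff₀ (by positivity)]
  calc (1 + S / (1 + I)) * (1 + S + I + 2 * √(S * I)) * (1 + 2 * I)
      ≤ (1 + S / (1 + I)) * (1 + S + I + (S + I)) * (1 + 2 * I) := by gcongr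
    _ ≤ 4 * ((1 + S + I) ^ 2 - S / (1 + I)) := one_add_div_mul_mul_le_four_mul_sq_sub_div hS hI
    _ = 2 ^ (2 : ℝ) * ((1 + S + I) ^ 2 - S / (1 + I)) := by norm_num
end

section
/- Fix real parameters SNR₁ ≥ 0, SNR₂ ≥ 0, INR₁₂ > 0, INR₂₁ > 0. Define the inner region R ⊆ ℝ² as the set of pairs (R₁,R₂) for which there exists ρ ∈ [0,1] with: R₁ ≤ log₂(1+SNR₁+INR₂₁+2ρ√(SNR₁·INR₂₁)) − 1; R₁ ≤ log₂(1+(1−ρ)INR₁₂) + log₂(2+SNR₁/INR₁₂) − 2; R₂ ≤ log₂(1+SNR₂+INR₁₂+2ρ√(SNR₂·INR₁₂)) − 1; R₂ ≤ log₂(1+(1−ρ)INR₂₁) + log₂(2+SNR₂/INR₂₁) − 2; R₁+R₂ ≤ log₂(2+SNR₁/INR₁₂) + log₂(1+SNR₂+INR₁₂+2ρ√(SNR₂·INR₁₂)) − 2; R₁+R₂ ≤ log₂(2+SNR₂/INR₂₁) + log₂(1+SNR₁+INR₂₁+2ρ√(SNR₁·INR₂₁)) − 2. Define the outer region C̄ ⊆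 ℝ² as the set of pairs (R₁,R₂) for which there exists ρ ∈ [0,1] with: R₁ ≤ log₂(1+SNR₁+INR₂₁+2ρ√(SNR₁·INR₂₁)); R₁ ≤ log₂(1+(1−ρ²)INR₁₂) + log₂(1+(1−ρ²)SNR₁/(1+(1−ρ²)INR₁₂)); R₂ ≤ log₂(1+SNR₂+INR₁₂+2ρ√(SNR₂·INR₁₂)); R₂ ≤ log₂(1+(1−ρ²)INR₂₁) + log₂(1+(1−ρ²)SNR₂/(1+(1−ρ²)INR₂₁)); R₁+R₂ ≤ log₂(1+(1−ρ²)SNR₁/(1+(1−ρ²)INR₁₂)) + log₂(1+SNR₂+INR₁₂+2ρ√(SNR₂·INR₁₂)); R₁+R₂ ≤ log₂(1+(1−ρ²)SNR₂/(1+(1−ρ²)INR₂₁)) + log₂(1+SNR₁+INR₂₁+2ρ√(SNR₁·INR₂₁)). Then C̄ is contained in the Minkowski sum R + ([0,2] × [0,2]); that is, for every (x,y) ∈ C̄ there exist (a,b) ∈ R and (e₁,e₂) ∈ [0,2]² with (x,y) = (a+e₁, b+e₂). -/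
open Real Set Pointwise

/-!
Correlating the two inputs buys little. By AM-GM it at most doubles the received power `1 + S + I`,
which is worth one bit; the residual power fraction `t = 1 - ρ ^ 2 ≤ 1` only shrinks `1 + t * I`,
and the residual ratio `t * S / (1 + t * I)` never exceeds `S / I`. Hence every rate pair of the
outer region, lowered by two bits per user, is achievable with uncorrelated inputs, `ρ = 0`.
-/

theorem abs_two_mul_mul_sqrt_mul_le {a b ρ : ℝ} (ha : 0 ≤ a) (hb : 0 ≤ b) (hρ : |ρ| ≤ 1) :
    |2 * ρ * √(a * b)| ≤ a + b :=
  calc |2 * ρ * √(a * b)| = |ρ| * (2 * √(a * b)) := by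
        rw [abs_mul, abs_mul, abs_two, abs_of_nonneg (sqrt_nonneg _)]
        ring
    _ ≤ 2 * √(a * b) := mul_le_of_le_one_left (by positivity) hρ
    _ ≤ a + b := two_mul_le_add_of_sq_le_mul ha hb (sq_sqrt (mul_nonneg ha hb)).le

theorem logb_le_logb_add_one {b x y : ℝ} (hb : 1 < b) (hx : 0 < x) (hxy : x ≤ b * y) :
    logb b x ≤ logb b y + 1 := by
  have hb₀ : 0 < b := one_pos.trans hb
  have hy : 0 < y := pos_of_mul_pos_right (hx.trans_le hxy) hb₀.le
  calc logb b x ≤ logb b (b * y) := logb_le_logb_of_le hb hx hxy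
    _ = logb b y + 1 := by
        rw [logb_mul hb₀.ne' hy.ne', logb_self_eq_one hb, add_comm]

theorem logb_correlated_power_le {S I ρ : ℝ} (hS : 0 ≤ S) (hI : 0 ≤ I) (hρ : |ρ| ≤ 1) :
    logb 2 (1 + S + I + 2 * ρ * √(S * I)) ≤ logb 2 (1 + S + I) + 1 := by
  obtain ⟨hlower, hupper⟩ := abs_le.1 (abs_two_mul_mul_sqrt_mul_le hS hI hρ)
  exact logb_le_logb_add_one one_lt_two (by linarith) (by linarith)

theorem mul_div_one_add_mul_le_div {K : Type*} [Field K] [LinearOrder K] [IsStrictOrderedRing K]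
    {a b t : K} (ha : 0 ≤ a) (hb : 0 < b) (ht : 0 ≤ t) : t * a / (1 + t * b) ≤ a / b := by
  rw [div_le_div_iff₀ (by positivity) hb]
  linarith

theorem logb_one_add_residual_snr_le {b S I t : ℝ} (hb : 1 < b) (hS : 0 ≤ S) (hI : 0 < I)
    (ht : 0 ≤ t) : logb b (1 + t * S / (1 + t * I)) ≤ logb b (2 + S / I) :=
  logb_le_logb_of_le hb (by positivity)
    (add_le_add one_le_two (mul_div_one_add_mul_le_div hS hI ht))

theorem logb_one_add_mul_le {b I t : ℝ} (hb : 1 < b) (hI : 0 ≤ I) (ht₀ : 0 ≤ t) (ht₁ : t ≤ 1) :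
    logb b (1 + t * I) ≤ logb b (1 + I) :=
  logb_le_logb_of_le hb (by positivity) (by grw [mul_le_of_le_one_left hI ht₁])

/-- The outer-bound region of the two-user Gaussian interference channel with feedback
is contained in the Minkowski sum of the inner (achievable) region and `[0,2] × [0,2]`:
a 2-bit/user gap between inner and outer bounds (Theorem 4 of the paper). -/
theorem capacity_region_two_bit_gap (SNR₁ SNR₂ INR₁₂ INR₂₁ : ℝ)
    (hS₁ : 0 ≤ SNR₁) (hS₂ : 0 ≤ SNR₂) (hI₁₂ : 0 < INR₁₂) (hI₂₁ : 0 < INR₂₁) :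
    {p : ℝ × ℝ | ∃ ρ ∈ Set.Icc (0 : ℝ) 1,
        p.1 ≤ Real.logb 2 (1 + SNR₁ + INR₂₁ + 2 * ρ * Real.sqrt (SNR₁ * INR₂₁)) ∧
        p.1 ≤ Real.logb 2 (1 + (1 - ρ ^ 2) * INR₁₂) +
              Real.logb 2 (1 + (1 - ρ ^ 2) * SNR₁ / (1 + (1 - ρ ^ 2) * INR₁₂)) ∧
        p.2 ≤ Real.logb 2 (1 + SNR₂ + INR₁₂ + 2 * ρ * Real.sqrt (SNR₂ * INR₁₂)) ∧
        p.2 ≤ Real.logb 2 (1 + (1 - ρ ^ 2) * INR₂₁) +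
              Real.logb 2 (1 + (1 - ρ ^ 2) * SNR₂ / (1 + (1 - ρ ^ 2) * INR₂₁)) ∧
        p.1 + p.2 ≤ Real.logb 2 (1 + (1 - ρ ^ 2) * SNR₁ / (1 + (1 - ρ ^ 2) * INR₁₂)) +
              Real.logb 2 (1 + SNR₂ + INR₁₂ + 2 * ρ * Real.sqrt (SNR₂ * INR₁₂)) ∧
        p.1 + p.2 ≤ Real.logb 2 (1 + (1 - ρ ^ 2) * SNR₂ / (1 + (1 - ρ ^ 2) * INR₂₁)) +
              Real.logb 2 (1 + SNR₁ + INR₂₁ + 2 * ρ * Real.sqrt (SNR₁ * INR₂₁))} ⊆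
      {p : ℝ × ℝ | ∃ ρ ∈ Set.Icc (0 : ℝ) 1,
        p.1 ≤ Real.logb 2 (1 + SNR₁ + INR₂₁ + 2 * ρ * Real.sqrt (SNR₁ * INR₂₁)) - 1 ∧
        p.1 ≤ Real.logb 2 (1 + (1 - ρ) * INR₁₂) + Real.logb 2 (2 + SNR₁ / INR₁₂) - 2 ∧
        p.2 ≤ Real.logb 2 (1 + SNR₂ + INR₁₂ + 2 * ρ * Real.sqrt (SNR₂ * INR₁₂)) - 1 ∧
        p.2 ≤ Real.logb 2 (1 + (1 - ρ) * INR₂₁) + Real.logb 2 (2 + SNR₂ / INR₂₁) - 2 ∧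
        p.1 + p.2 ≤ Real.logb 2 (2 + SNR₁ / INR₁₂) +
              Real.logb 2 (1 + SNR₂ + INR₁₂ + 2 * ρ * Real.sqrt (SNR₂ * INR₁₂)) - 2 ∧
        p.1 + p.2 ≤ Real.logb 2 (2 + SNR₂ / INR₂₁) +
              Real.logb 2 (1 + SNR₁ + INR₂₁ + 2 * ρ * Real.sqrt (SNR₁ * INR₂₁)) - 2} +
      (Set.Icc (0 : ℝ) 2 ×ˢ Set.Icc (0 : ℝ) 2) := by
  rintro ⟨R₁, R₂⟩ ⟨ρ, ⟨hρ₀, hρ₁⟩, hR₁, hR₁', hR₂, hR₂', hsum, hsum'⟩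
  have hρ : |ρ| ≤ 1 := abs_le.2 ⟨by linarith, hρ₁⟩
  have ht₀ : 0 ≤ 1 - ρ ^ 2 := sub_nonneg.2 (pow_le_one₀ hρ₀ hρ₁)
  have ht₁ : 1 - ρ ^ 2 ≤ 1 := sub_le_self 1 (sq_nonneg ρ)
  have hpower₁ := logb_correlated_power_le hS₁ hI₂₁.le hρ
  have hpower₂ := logb_correlated_power_le hS₂ hI₁₂.le hρ
  have hresidual₁ := logb_one_add_residual_snr_le one_lt_two hS₁ hI₁₂ ht₀
  have hresidual₂ := logb_one_add_residual_snr_le one_lt_two hS₂ hI₂₁ ht₀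
  have hcross₁₂ := logb_one_add_mul_le one_lt_two hI₁₂.le ht₀ ht₁
  have hcross₂₁ := logb_one_add_mul_le one_lt_two hI₂₁.le ht₀ ht₁
  refine mem_add.2 ⟨(R₁ - 2, R₂ - 2), ⟨0, by simp, ?_⟩, (2, 2), by simp, by simp⟩
  simp only [mul_zero, zero_mul, add_zero, sub_zero, one_mul]
  refine ⟨?_, ?_, ?_, ?_, ?_, ?_⟩ <;> linarith only [hR₁, hR₁', hR₂, hR₂', hsum, hsum',
    hpower₁, hpower₂, hresidual₁, hresidual₂, hcross₁₂, hcross₂₁]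
end

section
/- For all real S ≥ 0, I > 0, T ≥ 0 and ρ ∈ [0,1], the outer sum-rate expression at parameter ρ exceeds the inner sum-rate expression at the same ρ by at most 2 bits: log₂(1 + (1−ρ²)·S/(1 + (1−ρ²)·I)) + log₂(1 + T + I + 2ρ·√(T·I)) ≤ [ log₂(2 + S/I) + log₂(1 + T + I + 2ρ·√(T·I)) − 2 ] + 2. -/
theorem mul_div_add_mul_le_div {K : Type*} [Field K] [LinearOrder K] [IsStrictOrderedRing K]
    {a c x y : K} (ha : 0 ≤ a) (hc : 0 < c) (hx : 0 ≤ x) (hy : 0 < y) :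
    a * x / (c + a * y) ≤ x / y := by
  rw [div_le_div_iff₀ (by positivity) hy]
  calc
    a * x * y ≤ c * x + a * x * y := le_add_of_nonneg_left (by positivity)
    _ = x * (c + a * y) := by ring

theorem logb_one_add_mul_div_add_mul_le {a b c x y : ℝ} (hb : 1 < b) (ha : 0 ≤ a)
    (hc : 0 < c) (hx : 0 ≤ x) (hy : 0 < y) :
    Real.logb b (1 + a * x / (c + a * y)) ≤ Real.logb b (1 + x / y) :=
  Real.logb_le_logb_of_le hb (by positivity)
    (add_le_add_right (mul_div_add_mul_le_div ha hc hx hy) 1)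

-- The paper's bounds are the case `a = 1 - ρ ^ 2`; `R` is the second receiver's term, which
-- appears unchanged in both.
theorem sum_rate_two_bit_gap_fixed_rho_general {S I a : ℝ} (hS : 0 ≤ S) (hI : 0 < I)
    (ha : 0 ≤ a) (R : ℝ) :
    Real.logb 2 (1 + a * S / (1 + a * I)) + R ≤ (Real.logb 2 (2 + S / I) + R - 2) + 2 := by
  have hlogb : Real.logb 2 (1 + a * S / (1 + a * I)) ≤ Real.logb 2 (2 + S / I) := calc
    Real.logb 2 (1 + a * S / (1 + a * I)) ≤ Real.logb 2 (1 + S / I) :=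
      logb_one_add_mul_div_add_mul_le one_lt_two ha one_pos hS hI
    _ ≤ Real.logb 2 (2 + S / I) :=
      Real.logb_le_logb_of_le one_lt_two (by positivity) (by gcongr; exact one_le_two)
  linarith

/-- For each fixed correlation ρ ∈ [0,1], the outer sum-rate expression exceeds the
inner sum-rate expression (at the same ρ) by at most 2 bits. -/
theorem sum_rate_two_bit_gap_fixed_rho (S I T ρ : ℝ) (hS : 0 ≤ S) (hI : 0 < I)
    (hT : 0 ≤ T) (hρ0 : 0 ≤ ρ) (hρ1 : ρ ≤ 1) :
    Real.logb 2 (1 + (1 - ρ ^ 2) * S / (1 + (1 - ρ ^ 2) * I)) +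
        Real.logb 2 (1 + T + I + 2 * ρ * Real.sqrt (T * I)) ≤
      (Real.logb 2 (2 + S / I) +
          Real.logb 2 (1 + T + I + 2 * ρ * Real.sqrt (T * I)) - 2) + 2 :=
  sum_rate_two_bit_gap_fixed_rho_general hS hI (sub_nonneg.2 (pow_le_one₀ hρ0 hρ1)) _
end

section
/- Let 0 ≤ α < 1/3 and let ρ : (1,∞) → ℝ be a function such that for every s > 1, ρ(s) is the unique element of [0,1] satisfying 2·s^{(3α+1)/2}·ρ(s)⁴ + s^α·ρ(s)³ − 4·(s^{(3α+1)/2} + s^{(α+1)/2})·ρ(s)² − (2 + s + 2·s^α)·ρ(s) + 2·(s^{(3α+1)/2} + s^{(α+1)/2}) = 0. Define R(s) = log₂( (1 + s + s^α + 2·ρ(s)·s^{(α+1)/2}) / (1 + (1−ρ(s)²)·s^α) ). Then R(s)/log₂(s) tends to 1 − α as s → ∞. -/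
open Real Filter

/-!
With `A = s ^ ((3 * α + 1) / 2)`, `B = s ^ ((α + 1) / 2)` and `a = s ^ α`, the quartic equation
reads
`2 * A * (1 - r²)² + 2 * B * (1 - 2 * r²) = r * (2 + s + a * (2 - r²))`.
For `α ≤ 1 / 3` both `A` and `B` are at most `s`, so a root in `[0, 1]` satisfies `r ≤ 4 * (1 - r²)`
and thus stays away from `1`. The correlation therefore changes the powers inside the logarithm
only by bounded factors: the numerator is of order `s` and the denominator of order
`s ^ max α 0`. Bounded factors disappear when the logarithm is divided by `log₂ s`.
-/

open Asymptotics
open scoped Topology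

section LogarithmicGrowth

theorem isBigO_one_log_sub_log_of_isTheta {ι : Type*} {l : Filter ι} {f g : ι → ℝ}
    (h : f =Θ[l] g) : (fun x => log (f x) - log (g x)) =O[l] (fun _ => (1 : ℝ)) := by
  obtain ⟨C, hC, hfg⟩ := h.isBigO.exists_pos
  obtain ⟨D, hD, hgf⟩ := h.isBigO_symm.exists_pos
  refine IsBigO.of_bound (|log C| + |log D|) ?_
  filter_upwards [hfg.bound, hgf.bound, h.eq_zero_iff] with x hfx hgx hzero
  by_cases hf : f x = 0
  · rw [hf, hzero.mp hf, sub_self, norm_zero]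
    positivity
  have hg : g x ≠ 0 := mt hzero.mpr hf
  have upper : log (f x) ≤ log C + log (g x) := by
    rw [← log_abs (f x), ← log_abs (g x), ← log_mul hC.ne' (abs_ne_zero.mpr hg)]
    exact log_le_log (abs_pos.mpr hf) hfx
  have lower : log (g x) ≤ log D + log (f x) := by
    rw [← log_abs (f x), ← log_abs (g x), ← log_mul hD.ne' (abs_ne_zero.mpr hf)]
    exact log_le_log (abs_pos.mpr hg) hgx
  rw [norm_one, mul_one, norm_eq_abs, abs_le]
  constructor <;>
    linarith [le_abs_self (log C), le_abs_self (log D), abs_nonneg (log C), abs_nonneg (log D)]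

theorem tendsto_logb_of_isTheta_rpow {f : ℝ → ℝ} {p : ℝ} (h : f =Θ[atTop] fun s => s ^ p) :
    Tendsto (fun s => logb s (f s)) atTop (𝓝 p) := by
  have remainder : Tendsto (fun s => (log (f s) - log (s ^ p)) / log s) atTop (𝓝 0) :=
    ((isBigO_one_log_sub_log_of_isTheta h).trans_isLittleO
      isLittleO_const_log_atTop).tendsto_div_nhds_zero
  have shifted := remainder.const_add p
  rw [add_zero] at shifted
  refine shifted.congr' ?_
  filter_upwards [eventually_gt_atTop 1] with s hs
  have hlog : log s ≠ 0 := (log_pos hs).ne'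
  rw [log_rpow (by positivity), logb]
  field_simp
  ring

theorem tendsto_logb_div_logb_of_isTheta_rpow {b : ℝ} (hb : 1 < b) {f : ℝ → ℝ} {p : ℝ}
    (h : f =Θ[atTop] fun s => s ^ p) :
    Tendsto (fun s => logb b (f s) / logb b s) atTop (𝓝 p) :=
  (tendsto_logb_of_isTheta_rpow h).congr fun _ =>
    (div_div_div_cancel_right₀ (log_pos hb).ne' _ _).symm

end LogarithmicGrowth

theorem rpow_le_self_of_one_le_of_le_one {s p : ℝ} (hs : 1 ≤ s) (hp : p ≤ 1) : s ^ p ≤ s := by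
  simpa only [rpow_one] using rpow_le_rpow_of_exponent_le hs hp

theorem isTheta_one_add_mul_rpow {w : ℝ → ℝ} {c C : ℝ} (hc : 0 < c)
    (hw : ∀ᶠ s in atTop, w s ∈ Set.Icc c C) (α : ℝ) :
    (fun s => 1 + w s * s ^ α) =Θ[atTop] fun s => s ^ max α 0 := by
  constructor
  · refine IsBigO.of_bound (1 + C) ?_
    filter_upwards [hw, eventually_ge_atTop 1] with s ⟨hcw, hwC⟩ hs
    have hw0 : 0 ≤ w s := hc.le.trans hcw
    have hC0 : 0 ≤ C := hw0.trans hwC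
    have one_le : 1 ≤ s ^ max α 0 := one_le_rpow hs (le_max_right α 0)
    have rpow_le : s ^ α ≤ s ^ max α 0 := rpow_le_rpow_of_exponent_le hs (le_max_left α 0)
    rw [norm_of_nonneg (by positivity), norm_of_nonneg (by positivity)]
    calc 1 + w s * s ^ α ≤ s ^ max α 0 + C * s ^ max α 0 := by gcongr
      _ = (1 + C) * s ^ max α 0 := by ring
  · refine IsBigO.of_bound (1 + c⁻¹) ?_
    filter_upwards [hw, eventually_ge_atTop 1] with s ⟨hcw, _⟩ hs
    have hw0 : 0 ≤ w s := hc.le.trans hcw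
    have max_le_add : s ^ max α 0 ≤ 1 + s ^ α := by
      rw [(monotone_rpow_of_base_ge_one hs).map_max, rpow_zero, add_comm]
      exact max_le_add_of_nonneg (by positivity) zero_le_one
    have rpow_le : s ^ α ≤ c⁻¹ * (w s * s ^ α) := by
      rw [← mul_assoc]
      exact le_mul_of_one_le_left (by positivity) ((one_le_inv_mul₀ hc).mpr hcw)
    rw [norm_of_nonneg (by positivity), norm_of_nonneg (by positivity)]
    calc s ^ max α 0 ≤ 1 + c⁻¹ * (w s * s ^ α) := by linarith
      _ ≤ (1 + c⁻¹) * (1 + w s * s ^ α) := by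
        have : 0 ≤ c⁻¹ + w s * s ^ α := by positivity
        linarith

section KramerScheme

/-- The left-hand side of the quartic equation for the correlation coefficient `r` in Kramer's
feedback scheme, at signal-to-noise ratio `s` and interference-to-noise ratio `s ^ α`. -/
noncomputable def kramerQuartic (α s r : ℝ) : ℝ :=
  2 * s ^ ((3 * α + 1) / 2) * r ^ 4 + s ^ α * r ^ 3 -
    4 * (s ^ ((3 * α + 1) / 2) + s ^ ((α + 1) / 2)) * r ^ 2 -
    (2 + s + 2 * s ^ α) * r +
    2 * (s ^ ((3 * α + 1) / 2) + s ^ ((α + 1) / 2))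

/-- The power of the received signal (in units of the noise power) when the two transmitted signals
have correlation `r`; the numerator inside the logarithm of the rate. The cross term uses
`s ^ ((α + 1) / 2)` for the geometric mean of `s` and `s ^ α`. -/
noncomputable def receivedPower (α s r : ℝ) : ℝ :=
  1 + s + s ^ α + 2 * r * s ^ ((α + 1) / 2)

/-- The power of noise and interference left in the received signal once the desired signal is
known, the two transmitted signals having correlation `r`; the denominator inside the logarithm
of the rate. -/
noncomputable def residualPower (α s r : ℝ) : ℝ :=
  1 + (1 - r ^ 2) * s ^ α

variable {α : ℝ}

theorem kramerQuartic_eq (α s r : ℝ) :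
    kramerQuartic α s r =
      2 * s ^ ((3 * α + 1) / 2) * (1 - r ^ 2) ^ 2 + 2 * s ^ ((α + 1) / 2) * (1 - 2 * r ^ 2) -
        r * (2 + s + s ^ α * (2 - r ^ 2)) := by
  unfold kramerQuartic
  ring

theorem le_four_mul_one_sub_sq_of_kramerQuartic_eq_zero {s r : ℝ} (hα : α ≤ 1 / 3) (hs : 1 ≤ s)
    (hr : r ∈ Set.Icc (0 : ℝ) 1) (hroot : kramerQuartic α s r = 0) : r ≤ 4 * (1 - r ^ 2) := by
  obtain ⟨hr0, hr1⟩ := hr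
  have hs0 : 0 < s := by linarith
  have hsq : r ^ 2 ≤ 1 := pow_le_one₀ hr0 hr1
  have hgap : 0 ≤ 1 - r ^ 2 := sub_nonneg.mpr hsq
  have hA : s ^ ((3 * α + 1) / 2) ≤ s := rpow_le_self_of_one_le_of_le_one hs (by linarith)
  have hB : s ^ ((α + 1) / 2) ≤ s := rpow_le_self_of_one_le_of_le_one hs (by linarith)
  have hAterm : 2 * s ^ ((3 * α + 1) / 2) * (1 - r ^ 2) ^ 2 ≤ 2 * s * (1 - r ^ 2) := by
    gcongr
    exact pow_le_of_le_one hgap (by linarith [sq_nonneg r]) two_ne_zero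
  have hBterm : 2 * s ^ ((α + 1) / 2) * (1 - 2 * r ^ 2) ≤ 2 * s * (1 - r ^ 2) :=
    calc 2 * s ^ ((α + 1) / 2) * (1 - 2 * r ^ 2)
        ≤ 2 * s ^ ((α + 1) / 2) * (1 - r ^ 2) :=
          mul_le_mul_of_nonneg_left (by linarith [sq_nonneg r]) (by positivity)
      _ ≤ 2 * s * (1 - r ^ 2) := by gcongr
  refine le_of_mul_le_mul_left ?_ hs0
  rw [kramerQuartic_eq, sub_eq_zero] at hroot
  calc s * r = r * s := mul_comm s r
    _ ≤ r * (2 + s + s ^ α * (2 - r ^ 2)) := by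
      have : 0 ≤ s ^ α * (2 - r ^ 2) := mul_nonneg (by positivity) (by linarith)
      exact mul_le_mul_of_nonneg_left (by linarith) hr0
    _ = 2 * s ^ ((3 * α + 1) / 2) * (1 - r ^ 2) ^ 2 +
          2 * s ^ ((α + 1) / 2) * (1 - 2 * r ^ 2) := hroot.symm
    _ ≤ 2 * s * (1 - r ^ 2) + 2 * s * (1 - r ^ 2) := add_le_add hAterm hBterm
    _ = s * (4 * (1 - r ^ 2)) := by ring

theorem one_eighth_le_one_sub_sq_of_kramerQuartic_eq_zero {s r : ℝ} (hα : α ≤ 1 / 3) (hs : 1 ≤ s)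
    (hr : r ∈ Set.Icc (0 : ℝ) 1) (hroot : kramerQuartic α s r = 0) :
    1 / 8 ≤ 1 - r ^ 2 := by
  have hgap := le_four_mul_one_sub_sq_of_kramerQuartic_eq_zero hα hs hr hroot
  rcases le_total r (1 / 2) with hsmall | hlarge
  · have hsq : r ^ 2 ≤ (1 / 2) ^ 2 := pow_le_pow_left₀ hr.1 hsmall 2
    linarith
  · linarith

theorem isTheta_receivedPower (hα : α ≤ 1) {ρ : ℝ → ℝ}
    (hρ : ∀ᶠ s in atTop, ρ s ∈ Set.Icc (0 : ℝ) 1) :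
    (fun s => receivedPower α s (ρ s)) =Θ[atTop] fun s => s := by
  have bounds : ∀ᶠ s in atTop, 0 ≤ s ∧ s ≤ receivedPower α s (ρ s) ∧
      receivedPower α s (ρ s) ≤ 5 * s := by
    filter_upwards [hρ, eventually_ge_atTop 1] with s ⟨hρ0, hρ1⟩ hs
    have hs0 : 0 ≤ s := by linarith
    have hINR : s ^ α ≤ s := rpow_le_self_of_one_le_of_le_one hs hα
    have hINR0 : 0 ≤ s ^ α := by positivity
    have hcross : ρ s * s ^ ((α + 1) / 2) ≤ s :=
      (mul_le_of_le_one_left (by positivity) hρ1).trans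
        (rpow_le_self_of_one_le_of_le_one hs (by linarith))
    have hcross0 : 0 ≤ ρ s * s ^ ((α + 1) / 2) := by positivity
    unfold receivedPower
    refine ⟨hs0, ?_, ?_⟩ <;> linarith
  constructor
  · refine IsBigO.of_bound 5 (bounds.mono fun s ⟨hs0, hlower, hupper⟩ => ?_)
    rwa [norm_of_nonneg (hs0.trans hlower), norm_of_nonneg hs0]
  · refine IsBigO.of_bound' (bounds.mono fun s ⟨hs0, hlower, _⟩ => ?_)
    rwa [norm_of_nonneg (hs0.trans hlower), norm_of_nonneg hs0]

theorem isTheta_residualPower {ρ : ℝ → ℝ} {c : ℝ} (hc : 0 < c)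
    (hρ : ∀ᶠ s in atTop, c ≤ 1 - ρ s ^ 2) :
    (fun s => residualPower α s (ρ s)) =Θ[atTop] fun s => s ^ max α 0 :=
  isTheta_one_add_mul_rpow hc
    (hρ.mono fun s hs => ⟨hs, sub_le_self 1 (sq_nonneg (ρ s))⟩) α

theorem kramer_gdof_low_general (hα : α ≤ 1 / 3) {ρ : ℝ → ℝ}
    (hρ : ∀ᶠ s in atTop, ρ s ∈ Set.Icc (0 : ℝ) 1 ∧ kramerQuartic α s (ρ s) = 0) :
    Tendsto (fun s => logb 2 (receivedPower α s (ρ s) / residualPower α s (ρ s)) / logb 2 s)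
      atTop (𝓝 (1 - max α 0)) := by
  have hgap : ∀ᶠ s in atTop, 1 / 8 ≤ 1 - ρ s ^ 2 := by
    filter_upwards [hρ, eventually_ge_atTop 1] with s ⟨hmem, hroot⟩ hs
    exact one_eighth_le_one_sub_sq_of_kramerQuartic_eq_zero hα hs hmem hroot
  have hratio := (isTheta_receivedPower (by linarith) (hρ.mono fun _ h => h.1)).div
    (isTheta_residualPower (α := α) (by norm_num) hgap)
  refine tendsto_logb_div_logb_of_isTheta_rpow one_lt_two (hratio.trans_eventuallyEq ?_)
  filter_upwards [eventually_gt_atTop 0] with s hs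
  rw [rpow_sub hs, rpow_one]

end KramerScheme

/-- Generalized degrees-of-freedom of Kramer's feedback scheme for `0 ≤ α < 1/3`. -/
theorem kramer_gdof_low (α : ℝ) (hα0 : 0 ≤ α) (hα1 : α < 1 / 3) (ρ : ℝ → ℝ)
    (hρ : ∀ s : ℝ, 1 < s →
      ρ s ∈ Set.Icc (0 : ℝ) 1 ∧
      (2 * s ^ ((3 * α + 1) / 2) * ρ s ^ 4 + s ^ α * ρ s ^ 3 -
          4 * (s ^ ((3 * α + 1) / 2) + s ^ ((α + 1) / 2)) * ρ s ^ 2 -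
          (2 + s + 2 * s ^ α) * ρ s +
          2 * (s ^ ((3 * α + 1) / 2) + s ^ ((α + 1) / 2)) = 0) ∧
      ∀ r ∈ Set.Icc (0 : ℝ) 1,
        2 * s ^ ((3 * α + 1) / 2) * r ^ 4 + s ^ α * r ^ 3 -
            4 * (s ^ ((3 * α + 1) / 2) + s ^ ((α + 1) / 2)) * r ^ 2 -
            (2 + s + 2 * s ^ α) * r +
            2 * (s ^ ((3 * α + 1) / 2) + s ^ ((α + 1) / 2)) = 0 → r = ρ s) :
    Tendsto (fun s : ℝ =>
        Real.logb 2 ((1 + s + s ^ α + 2 * ρ s * s ^ ((α + 1) / 2)) /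
            (1 + (1 - ρ s ^ 2) * s ^ α)) / Real.logb 2 s)
      atTop (nhds (1 - α)) := by
  simpa only [receivedPower, residualPower, max_eq_left hα0] using kramer_gdof_low_general hα1.le
    ((eventually_gt_atTop 1).mono fun s hs => ⟨(hρ s hs).1, (hρ s hs).2.1⟩)
end

section
/- Let Ω be a standard Borel probability space with probability measure μ. Let A, B and, for each j ∈ ℕ, alphabets 𝒱₁ⱼ, 𝒱₂ⱼ, 𝒳₁ⱼ, 𝒳₂ⱼ be nonempty finite types with the discrete measurable structure. Let W₁ : Ω → A and W₂ : Ω → B be measurable and independent under μ. Suppose random sequences are defined recursively by deterministic functions: V₁ⱼ = F₁ⱼ(W₁, (V₂ₖ)_{k<j}) and V₂ⱼ = F₂ⱼ(W₂, (V₁ₖ)_{k<j}) for all j, and channel inputs are given by X₁ᵢ = G₁ᵢ(W₁, (V₂ₖ)_{k<i}) and X₂ᵢ = G₂ᵢ(W₂, (V₁ₖ)_{k<i}). Then for every i ∈ ℕ, the random variables X₁ᵢ and X₂ᵢ are conditionally independent given the σ-algebra generated by the transcript U ᵢ = ((V₁ⱼ)_{j<i}, (V₂ⱼ)_{j<i}).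 -/
open MeasureTheory ProbabilityTheory

/-!
Two facts about conditional independence of `σ`-algebras drive the argument. First, the conditioning
`σ`-algebra `m` may be absorbed into either side: if `m₁ ⫫ m₂ | m`, then `m ⊔ m₁ ⫫ m₂ | m`. Second,
when `m ≤ m₁`, the relation `m₁ ⫫ m₂ | m` says that `m₁` predicts events of `m₂` no better than `m`
does, a property inherited by every `n` with `m ≤ n ≤ m₁`. Together they allow the conditioning to
be enlarged by anything computable from `m` and one of the two sides.

The transcript grows exactly in this way: the next signal of a user is computed from the transcript
and the message of that user. Hence, by induction on time, the messages stay conditionally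
independent given the transcript, and so do the inputs, each of them being a function of the
transcript and one message.
-/

section ConditionalExpectation

variable {Ω : Type*} {m mΩ : MeasurableSpace Ω} {μ : Measure Ω} [IsFiniteMeasure μ]
  {s t : Set Ω}

theorem condExp_indicator_ae_eq_mul_of_stronglyMeasurable {f : Ω → ℝ}
    (hs : MeasurableSet s) (hf : StronglyMeasurable[m] f) (hf_int : Integrable f μ) :
    μ[s.indicator f | m] =ᵐ[μ] μ⟦s | m⟧ * f := by
  have indicator_eq_mul : s.indicator f = s.indicator (fun _ => 1) * f := by
    ext ω
    simp only [Pi.mul_apply, ← Set.indicator_mul_left, one_mul]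
  have hsf_int : Integrable (s.indicator (fun _ => 1) * f) μ :=
    indicator_eq_mul ▸ hf_int.indicator hs
  rw [indicator_eq_mul]
  exact condExp_mul_of_stronglyMeasurable_right hf hsf_int ((integrable_const 1).indicator hs)

theorem condExp_inter_ae_eq_indicator (hs : MeasurableSet[m] s) (ht : MeasurableSet t) :
    μ⟦s ∩ t | m⟧ =ᵐ[μ] s.indicator (μ⟦t | m⟧) := by
  rw [← Set.indicator_indicator]
  exact condExp_indicator ((integrable_const 1).indicator ht) hs

end ConditionalExpectation

theorem isPiSystem_image2_inter {α : Type*} {p q : Set (Set α)}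
    (hp : IsPiSystem p) (hq : IsPiSystem q) : IsPiSystem (Set.image2 (· ∩ ·) p q) := by
  rintro _ ⟨s, hs, t, ht, rfl⟩ _ ⟨s', hs', t', ht', rfl⟩ hne
  rw [Set.inter_inter_inter_comm] at hne ⊢
  exact ⟨s ∩ s', hp s hs s' hs' hne.left, t ∩ t', hq t ht t' ht' hne.right, rfl⟩

theorem sup_eq_generateFrom_image2_inter {α : Type*} (m₁ m₂ : MeasurableSpace α) :
    m₁ ⊔ m₂ = MeasurableSpace.generateFrom
      (Set.image2 (· ∩ ·) {s | MeasurableSet[m₁] s} {s | MeasurableSet[m₂] s}) := by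
  refine le_antisymm (sup_le (fun s hs => ?_) (fun t ht => ?_))
    (MeasurableSpace.generateFrom_le ?_)
  · exact MeasurableSpace.measurableSet_generateFrom
      ⟨s, hs, Set.univ, MeasurableSet.univ, Set.inter_univ s⟩
  · exact MeasurableSpace.measurableSet_generateFrom
      ⟨Set.univ, MeasurableSet.univ, t, ht, Set.univ_inter t⟩
  · rintro _ ⟨s, hs, t, ht, rfl⟩
    exact MeasurableSet.inter (le_sup_left (b := m₂) s hs) (le_sup_right (a := m₁) t ht)

section ConditionalIndependence

variable {Ω : Type*} {m m₁ m₂ n mΩ : MeasurableSpace Ω} [StandardBorelSpace Ω]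
  {μ : Measure Ω}

theorem condIndep_bot_of_indep [IsProbabilityMeasure μ] (hm₁ : m₁ ≤ mΩ) (hm₂ : m₂ ≤ mΩ)
    (h : Indep m₁ m₂ μ) : CondIndep ⊥ m₁ m₂ bot_le μ := by
  rw [condIndep_iff _ _ _ _ hm₁ hm₂]
  intro s t hs ht
  have measureReal_inter : μ.real (s ∩ t) = μ.real s * μ.real t := by
    simp only [measureReal_def, (Indep_iff _ _ _).1 h s t hs ht, ENNReal.toReal_mul]
  filter_upwards with ω
  simpa [condExp_bot, integral_indicator_const, hm₁ s hs, hm₂ t ht, (hm₁ s hs).inter (hm₂ t ht)]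
    using measureReal_inter

variable [IsFiniteMeasure μ] {hm : m ≤ mΩ}

theorem condIndep_sup_left (hm₁ : m₁ ≤ mΩ) (hm₂ : m₂ ≤ mΩ) (h : CondIndep m m₁ m₂ hm μ) :
    CondIndep m (m ⊔ m₁) m₂ hm μ := by
  rw [condIndep_iff _ _ _ _ hm₁ hm₂] at h
  refine CondIndepSets.condIndep (sup_le hm hm₁) hm₂
    (isPiSystem_image2_inter (@MeasurableSpace.isPiSystem_measurableSet _ m)
      (@MeasurableSpace.isPiSystem_measurableSet _ m₁))
    (@MeasurableSpace.isPiSystem_measurableSet _ m₂)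
    (sup_eq_generateFrom_image2_inter m m₁)
    (@MeasurableSpace.generateFrom_measurableSet _ m₂).symm ?_
  rw [condIndepSets_iff]
  · rintro _ r ⟨s, hs, t, ht, rfl⟩ hr
    have htr : MeasurableSet (t ∩ r) := (hm₁ t ht).inter (hm₂ r hr)
    rw [Set.inter_assoc]
    filter_upwards [condExp_inter_ae_eq_indicator hs htr,
      condExp_inter_ae_eq_indicator hs (hm₁ t ht), h t r ht hr] with ω hstr hst htr_eq
    by_cases hω : ω ∈ s <;> simp [hstr, hst, hω, htr_eq]
  · rintro _ ⟨s, hs, t, ht, rfl⟩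
    exact (hm s hs).inter (hm₁ t ht)
  · exact hm₂

theorem condIndep_sup_sup (hm₁ : m₁ ≤ mΩ) (hm₂ : m₂ ≤ mΩ) (h : CondIndep m m₁ m₂ hm μ) :
    CondIndep m (m ⊔ m₁) (m ⊔ m₂) hm μ :=
  (condIndep_sup_left hm₂ (sup_le hm hm₁) (condIndep_sup_left hm₁ hm₂ h).symm).symm

theorem condIndep_iff_condExp_ae_eq_condExp (hle : m ≤ m₁) (hm₁ : m₁ ≤ mΩ) (hm₂ : m₂ ≤ mΩ) :
    CondIndep m m₁ m₂ hm μ ↔ ∀ t, MeasurableSet[m₂] t → μ⟦t | m₁⟧ =ᵐ[μ] μ⟦t | m⟧ := by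
  rw [condIndep_iff _ _ _ _ hm₁ hm₂]
  have condExp_indicator_condExp {s t : Set Ω} (hs : MeasurableSet[m₁] s) :
      μ[s.indicator (μ⟦t | m⟧) | m] =ᵐ[μ] μ⟦s | m⟧ * μ⟦t | m⟧ :=
    condExp_indicator_ae_eq_mul_of_stronglyMeasurable (hm₁ s hs) stronglyMeasurable_condExp
      integrable_condExp
  refine ⟨fun h t ht => ?_, fun h s t hs ht => ?_⟩
  · have ht_int : Integrable (t.indicator fun _ => (1 : ℝ)) μ :=
      (integrable_const 1).indicator (hm₂ t ht)
    refine (ae_eq_condExp_of_forall_setIntegral_eq hm₁ ht_int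
      (fun s _ _ => integrable_condExp.integrableOn) (fun s hs _ => ?_)
      (stronglyMeasurable_condExp.mono hle).aestronglyMeasurable).symm
    calc ∫ ω in s, (μ⟦t | m⟧) ω ∂μ
        = ∫ ω, (μ[s.indicator (μ⟦t | m⟧) | m]) ω ∂μ := by
          rw [integral_condExp hm, integral_indicator (hm₁ s hs)]
      _ = ∫ ω, (μ⟦s ∩ t | m⟧) ω ∂μ :=
          integral_congr_ae ((condExp_indicator_condExp hs).trans (h s t hs ht).symm)
      _ = ∫ ω in s, t.indicator (fun _ => (1 : ℝ)) ω ∂μ := by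
          rw [integral_condExp hm, ← Set.indicator_indicator, integral_indicator (hm₁ s hs)]
  · calc μ⟦s ∩ t | m⟧
        =ᵐ[μ] μ[μ⟦s ∩ t | m₁⟧ | m] := (condExp_condExp_of_le hle hm₁).symm
      _ =ᵐ[μ] μ[s.indicator (μ⟦t | m₁⟧) | m] :=
          condExp_congr_ae (condExp_inter_ae_eq_indicator hs (hm₂ t ht))
      _ =ᵐ[μ] μ[s.indicator (μ⟦t | m⟧) | m] :=
          condExp_congr_ae ((h t ht).indicator)
      _ =ᵐ[μ] μ⟦s | m⟧ * μ⟦t | m⟧ := condExp_indicator_condExp hs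

theorem condIndep_of_condIndep_of_le_of_le (hm₁ : m₁ ≤ mΩ) (hm₂ : m₂ ≤ mΩ) (hmn : m ≤ n)
    (hnm₁ : n ≤ m₁) (h : CondIndep m m₁ m₂ hm μ) : CondIndep n m₁ m₂ (hnm₁.trans hm₁) μ := by
  rw [condIndep_iff_condExp_ae_eq_condExp (hmn.trans hnm₁) hm₁ hm₂] at h
  rw [condIndep_iff_condExp_ae_eq_condExp hnm₁ hm₁ hm₂]
  intro t ht
  calc μ⟦t | m₁⟧
      =ᵐ[μ] μ⟦t | m⟧ := h t ht
    _ = μ[μ⟦t | m⟧ | n] := (condExp_of_stronglyMeasurable (hnm₁.trans hm₁)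
        (stronglyMeasurable_condExp.mono hmn) integrable_condExp).symm
    _ =ᵐ[μ] μ[μ⟦t | m₁⟧ | n] := condExp_congr_ae (h t ht).symm
    _ =ᵐ[μ] μ⟦t | n⟧ := condExp_condExp_of_le hnm₁ hm₁

theorem condIndep_of_condIndep_of_le_of_le_sup_left (hm₁ : m₁ ≤ mΩ) (hm₂ : m₂ ≤ mΩ) (hmn : m ≤ n)
    (hn : n ≤ m ⊔ m₁) (h : CondIndep m m₁ m₂ hm μ) :
    CondIndep n m₁ m₂ (hn.trans (sup_le hm hm₁)) μ :=
  condIndep_of_condIndep_of_le_left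
    (condIndep_of_condIndep_of_le_of_le (sup_le hm hm₁) hm₂ hmn hn (condIndep_sup_left hm₁ hm₂ h))
    le_sup_right

theorem condIndep_of_condIndep_of_le_of_le_sup_right (hm₁ : m₁ ≤ mΩ) (hm₂ : m₂ ≤ mΩ) (hmn : m ≤ n)
    (hn : n ≤ m ⊔ m₂) (h : CondIndep m m₁ m₂ hm μ) :
    CondIndep n m₁ m₂ (hn.trans (sup_le hm hm₂)) μ :=
  (condIndep_of_condIndep_of_le_of_le_sup_left hm₂ hm₁ hmn hn h.symm).symm

end ConditionalIndependence

theorem comap_le_sup_comap_of_eq {Ω α β γ : Type*} [MeasurableSpace α] [MeasurableSpace β]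
    [MeasurableSpace γ] {m : MeasurableSpace Ω} {W : Ω → α} {Z : Ω → β} {Y : Ω → γ}
    {f : α → β → γ} (hf : Measurable (Function.uncurry f)) (hZ : Measurable[m] Z)
    (hY : ∀ ω, Y ω = f (W ω) (Z ω)) :
    MeasurableSpace.comap Y inferInstance ≤ m ⊔ MeasurableSpace.comap W inferInstance := by
  have hW : Measurable[m ⊔ MeasurableSpace.comap W inferInstance] W :=
    (comap_measurable W).mono le_sup_right le_rfl
  have hZ' : Measurable[m ⊔ MeasurableSpace.comap W inferInstance] Z :=
    hZ.mono le_sup_left le_rfl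
  rw [← measurable_iff_comap_le, funext hY]
  exact hf.comp (hW.prodMk hZ')

section Transcript

variable {Ω : Type*} {𝒱₁ 𝒱₂ : ℕ → Type*} [∀ j, MeasurableSpace (𝒱₁ j)]
  [∀ j, MeasurableSpace (𝒱₂ j)] {V₁ : (j : ℕ) → Ω → 𝒱₁ j} {V₂ : (j : ℕ) → Ω → 𝒱₂ j}

/-- The `σ`-algebra of the transcript `Uᵢ = (V₁^{i-1}, V₂^{i-1})`, on which the messages and the
inputs at time `i` are conditioned. Times start at `0`, so the signals involved are those at the
times `j < i`. -/
abbrev transcriptSigmaAlgebra (V₁ : (j : ℕ) → Ω → 𝒱₁ j) (V₂ : (j : ℕ) → Ω → 𝒱₂ j) (i : ℕ) :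
    MeasurableSpace Ω :=
  MeasurableSpace.comap
    (fun ω => ((fun j : Fin i => V₁ j.1 ω), (fun j : Fin i => V₂ j.1 ω))) inferInstance

theorem measurable_past_fst (i : ℕ) :
    Measurable[transcriptSigmaAlgebra V₁ V₂ i] fun ω (j : Fin i) => V₁ j.1 ω :=
  measurable_fst.comp (comap_measurable _)

theorem measurable_past_snd (i : ℕ) :
    Measurable[transcriptSigmaAlgebra V₁ V₂ i] fun ω (j : Fin i) => V₂ j.1 ω :=
  measurable_snd.comp (comap_measurable _)

theorem transcriptSigmaAlgebra_le_iff {m : MeasurableSpace Ω} {i : ℕ} :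
    transcriptSigmaAlgebra V₁ V₂ i ≤ m ↔ ∀ j < i, Measurable[m] (V₁ j) ∧ Measurable[m] (V₂ j) := by
  have eq_sup : transcriptSigmaAlgebra V₁ V₂ i =
      MeasurableSpace.comap (fun ω (j : Fin i) => V₁ j.1 ω) inferInstance ⊔
        MeasurableSpace.comap (fun ω (j : Fin i) => V₂ j.1 ω) inferInstance :=
    MeasurableSpace.comap_prodMk _ _
  rw [eq_sup, sup_le_iff, ← measurable_iff_comap_le, ← measurable_iff_comap_le,
    measurable_pi_iff, measurable_pi_iff, ← forall_and, Fin.forall_iff]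

theorem transcriptSigmaAlgebra_zero : transcriptSigmaAlgebra V₁ V₂ 0 = ⊥ := by
  simp [← le_bot_iff, transcriptSigmaAlgebra_le_iff]

theorem transcriptSigmaAlgebra_succ (i : ℕ) :
    transcriptSigmaAlgebra V₁ V₂ (i + 1) = transcriptSigmaAlgebra V₁ V₂ i ⊔
      MeasurableSpace.comap (V₁ i) inferInstance ⊔ MeasurableSpace.comap (V₂ i) inferInstance := by
  refine eq_of_forall_ge_iff fun m => ?_
  rw [sup_le_iff, sup_le_iff, transcriptSigmaAlgebra_le_iff, transcriptSigmaAlgebra_le_iff,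
    Nat.forall_lt_succ_right, measurable_iff_comap_le, measurable_iff_comap_le, and_assoc]

end Transcript

section DependenceBalance

variable {Ω : Type*} [mΩ : MeasurableSpace Ω] {A B : Type*} [MeasurableSpace A] [MeasurableSpace B]
  {𝒱₁ 𝒱₂ 𝒳₁ 𝒳₂ : ℕ → Type*}
  [∀ j, MeasurableSpace (𝒱₁ j)] [∀ j, MeasurableSpace (𝒱₂ j)]
  [∀ i, MeasurableSpace (𝒳₁ i)] [∀ i, MeasurableSpace (𝒳₂ i)]
  {W₁ : Ω → A} {W₂ : Ω → B}
  {F₁ : (j : ℕ) → A → ((k : Fin j) → 𝒱₂ k.1) → 𝒱₁ j}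
  {F₂ : (j : ℕ) → B → ((k : Fin j) → 𝒱₁ k.1) → 𝒱₂ j}
  {G₁ : (i : ℕ) → A → ((k : Fin i) → 𝒱₂ k.1) → 𝒳₁ i}
  {G₂ : (i : ℕ) → B → ((k : Fin i) → 𝒱₁ k.1) → 𝒳₂ i}
  {V₁ : (j : ℕ) → Ω → 𝒱₁ j} {V₂ : (j : ℕ) → Ω → 𝒱₂ j}
  {X₁ : (i : ℕ) → Ω → 𝒳₁ i} {X₂ : (i : ℕ) → Ω → 𝒳₂ i}

theorem transcriptSigmaAlgebra_le (hW₁ : Measurable W₁) (hW₂ : Measurable W₂)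
    (hF₁ : ∀ j, Measurable (Function.uncurry (F₁ j)))
    (hF₂ : ∀ j, Measurable (Function.uncurry (F₂ j)))
    (hV₁ : ∀ j ω, V₁ j ω = F₁ j (W₁ ω) (fun k => V₂ k.1 ω))
    (hV₂ : ∀ j ω, V₂ j ω = F₂ j (W₂ ω) (fun k => V₁ k.1 ω)) (i : ℕ) :
    transcriptSigmaAlgebra V₁ V₂ i ≤ mΩ := by
  induction i with
  | zero => exact transcriptSigmaAlgebra_zero.trans_le bot_le
  | succ i ih =>
    have hV₁_le := comap_le_sup_comap_of_eq (hF₁ i) (measurable_past_snd (V₁ := V₁) i) (hV₁ i)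
    have hV₂_le := comap_le_sup_comap_of_eq (hF₂ i) (measurable_past_fst (V₂ := V₂) i) (hV₂ i)
    rw [transcriptSigmaAlgebra_succ]
    exact sup_le (sup_le ih (hV₁_le.trans (sup_le ih hW₁.comap_le)))
      (hV₂_le.trans (sup_le ih hW₂.comap_le))

variable [StandardBorelSpace Ω] {μ : Measure Ω} [IsProbabilityMeasure μ]

theorem messages_condIndep_given_transcript (hW₁ : Measurable W₁) (hW₂ : Measurable W₂)
    (hIndep : IndepFun W₁ W₂ μ)
    (hF₁ : ∀ j, Measurable (Function.uncurry (F₁ j)))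
    (hF₂ : ∀ j, Measurable (Function.uncurry (F₂ j)))
    (hV₁ : ∀ j ω, V₁ j ω = F₁ j (W₁ ω) (fun k => V₂ k.1 ω))
    (hV₂ : ∀ j ω, V₂ j ω = F₂ j (W₂ ω) (fun k => V₁ k.1 ω)) (i : ℕ) :
    CondIndepFun (transcriptSigmaAlgebra V₁ V₂ i)
      (transcriptSigmaAlgebra_le hW₁ hW₂ hF₁ hF₂ hV₁ hV₂ i) W₁ W₂ μ := by
  rw [condIndepFun_iff_condIndep]
  induction i with
  | zero =>
    simpa only [transcriptSigmaAlgebra_zero] using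
      condIndep_bot_of_indep hW₁.comap_le hW₂.comap_le ((IndepFun_iff_Indep _ _ _).1 hIndep)
  | succ i ih =>
    have hV₁_le := comap_le_sup_comap_of_eq (hF₁ i) (measurable_past_snd (V₁ := V₁) i) (hV₁ i)
    have hV₂_le := comap_le_sup_comap_of_eq (hF₂ i) (measurable_past_fst (V₂ := V₂) i) (hV₂ i)
    have given_V₁ := condIndep_of_condIndep_of_le_of_le_sup_left hW₁.comap_le hW₂.comap_le
      le_sup_left (sup_le le_sup_left hV₁_le) ih
    simp only [transcriptSigmaAlgebra_succ]
    exact condIndep_of_condIndep_of_le_of_le_sup_right hW₁.comap_le hW₂.comap_le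
      le_sup_left (sup_le le_sup_left (hV₂_le.trans (sup_le_sup_right le_sup_left _))) given_V₁

theorem inputs_condIndep_given_transcript_general (hW₁ : Measurable W₁) (hW₂ : Measurable W₂)
    (hIndep : IndepFun W₁ W₂ μ)
    (hF₁ : ∀ j, Measurable (Function.uncurry (F₁ j)))
    (hF₂ : ∀ j, Measurable (Function.uncurry (F₂ j)))
    (hG₁ : ∀ i, Measurable (Function.uncurry (G₁ i)))
    (hG₂ : ∀ i, Measurable (Function.uncurry (G₂ i)))
    (hV₁ : ∀ j ω, V₁ j ω = F₁ j (W₁ ω) (fun k => V₂ k.1 ω))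
    (hV₂ : ∀ j ω, V₂ j ω = F₂ j (W₂ ω) (fun k => V₁ k.1 ω))
    (hX₁ : ∀ i ω, X₁ i ω = G₁ i (W₁ ω) (fun k => V₂ k.1 ω))
    (hX₂ : ∀ i ω, X₂ i ω = G₂ i (W₂ ω) (fun k => V₁ k.1 ω)) (i : ℕ) :
    CondIndepFun (transcriptSigmaAlgebra V₁ V₂ i)
      (transcriptSigmaAlgebra_le hW₁ hW₂ hF₁ hF₂ hV₁ hV₂ i) (X₁ i) (X₂ i) μ := by
  have messages := messages_condIndep_given_transcript hW₁ hW₂ hIndep hF₁ hF₂ hV₁ hV₂ i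
  rw [condIndepFun_iff_condIndep] at messages ⊢
  have hX₁_le := comap_le_sup_comap_of_eq (hG₁ i) (measurable_past_snd (V₁ := V₁) i) (hX₁ i)
  have hX₂_le := comap_le_sup_comap_of_eq (hG₂ i) (measurable_past_fst (V₂ := V₂) i) (hX₂ i)
  exact condIndep_of_condIndep_of_le_left (condIndep_of_condIndep_of_le_right
    (condIndep_sup_sup hW₁.comap_le hW₂.comap_le messages) hX₂_le) hX₁_le

end DependenceBalance

/-- Dependence-balance claim (Claim 7): if the common signals `V₁, V₂` and inputs
`X₁, X₂` are generated causally from independent messages `W₁, W₂` through deterministic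
functions, then at every time `i` the inputs `X₁ᵢ` and `X₂ᵢ` are conditionally independent
given the transcript `Uᵢ = (V₁^{i-1}, V₂^{i-1})`. -/
theorem inputs_condIndep_given_transcript
    {Ω : Type*} [mΩ : MeasurableSpace Ω] [StandardBorelSpace Ω]
    (μ : Measure Ω) [IsProbabilityMeasure μ]
    {A B : Type*} [Fintype A] [Nonempty A] [MeasurableSpace A] [MeasurableSingletonClass A]
    [Fintype B] [Nonempty B] [MeasurableSpace B] [MeasurableSingletonClass B]
    (𝒱₁ 𝒱₂ 𝒳₁ 𝒳₂ : ℕ → Type*)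
    [∀ j, Fintype (𝒱₁ j)] [∀ j, Nonempty (𝒱₁ j)]
    [∀ j, MeasurableSpace (𝒱₁ j)] [∀ j, MeasurableSingletonClass (𝒱₁ j)]
    [∀ j, Fintype (𝒱₂ j)] [∀ j, Nonempty (𝒱₂ j)]
    [∀ j, MeasurableSpace (𝒱₂ j)] [∀ j, MeasurableSingletonClass (𝒱₂ j)]
    [∀ i, Fintype (𝒳₁ i)] [∀ i, Nonempty (𝒳₁ i)]
    [∀ i, MeasurableSpace (𝒳₁ i)] [∀ i, MeasurableSingletonClass (𝒳₁ i)]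
    [∀ i, Fintype (𝒳₂ i)] [∀ i, Nonempty (𝒳₂ i)]
    [∀ i, MeasurableSpace (𝒳₂ i)] [∀ i, MeasurableSingletonClass (𝒳₂ i)]
    (W₁ : Ω → A) (W₂ : Ω → B) (hW₁ : Measurable W₁) (hW₂ : Measurable W₂)
    (hIndep : IndepFun W₁ W₂ μ)
    (F₁ : (j : ℕ) → A → ((k : Fin j) → 𝒱₂ k.1) → 𝒱₁ j)
    (F₂ : (j : ℕ) → B → ((k : Fin j) → 𝒱₁ k.1) → 𝒱₂ j)
    (G₁ : (i : ℕ) → A → ((k : Fin i) → 𝒱₂ k.1) → 𝒳₁ i)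
    (G₂ : (i : ℕ) → B → ((k : Fin i) → 𝒱₁ k.1) → 𝒳₂ i)
    (V₁ : (j : ℕ) → Ω → 𝒱₁ j) (V₂ : (j : ℕ) → Ω → 𝒱₂ j)
    (X₁ : (i : ℕ) → Ω → 𝒳₁ i) (X₂ : (i : ℕ) → Ω → 𝒳₂ i)
    (hV₁ : ∀ (j : ℕ) (ω : Ω), V₁ j ω = F₁ j (W₁ ω) (fun k => V₂ k.1 ω))
    (hV₂ : ∀ (j : ℕ) (ω : Ω), V₂ j ω = F₂ j (W₂ ω) (fun k => V₁ k.1 ω))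
    (hX₁ : ∀ (i : ℕ) (ω : Ω), X₁ i ω = G₁ i (W₁ ω) (fun k => V₂ k.1 ω))
    (hX₂ : ∀ (i : ℕ) (ω : Ω), X₂ i ω = G₂ i (W₂ ω) (fun k => V₁ k.1 ω))
    (hm : ∀ i : ℕ,
      MeasurableSpace.comap
        (fun ω => ((fun j : Fin i => V₁ j.1 ω), (fun j : Fin i => V₂ j.1 ω)))
        inferInstance ≤ mΩ) :
    ∀ i : ℕ, CondIndepFun
      (MeasurableSpace.comap
        (fun ω => ((fun j : Fin i => V₁ j.1 ω), (fun j : Fin i => V₂ j.1 ω)))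
        inferInstance)
      (hm i) (X₁ i) (X₂ i) μ := by
  exact inputs_condIndep_given_transcript_general hW₁ hW₂ hIndep
    (fun _ => measurable_of_countable _) (fun _ => measurable_of_countable _)
    (fun _ => measurable_of_countable _) (fun _ => measurable_of_countable _) hV₁ hV₂ hX₁ hX₂
end
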